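/- Let G be a vulnerability graph with host part H and vulnerability part W, let D be its dual graph, and let C be a vertex cover of D. Then in the induced subgraph of G on H ∪ (W \ C), any two distinct vulnerability vertices of W \ C lie in different connected components; equivalently, there is no path in that induced subgraph joining two distinct vertices of W \ C. -/

import Mathlib

/-!
The neighbours of a host are pairwise adjacent in the dual graph, so a vertex cover misses at most
one of them. Once the cover is removed, the component of a remaining vulnerability `v` is therefore
a star: `v` together with the hosts adjacent to it.
-/

/-- The dual graph of a vulnerability graph `G` with hosts `H` and vulnerabilities `W`. It is
encoded on the full vertex type of `G`, so vertices outside `W` are isolated. -/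
def dualGraph {V : Type*} (G : SimpleGraph V) (H W : Set V) : SimpleGraph V where
  Adj v v' := v ≠ v' ∧ v ∈ W ∧ v' ∈ W ∧ ∃ h ∈ H, G.Adj h v ∧ G.Adj h v'
  symm := ⟨fun _ _ ⟨hne, hv, hv', h, hh, hhv, hhv'⟩ => ⟨hne.symm, hv', hv, h, hh, hhv', hhv⟩⟩

section

variable {V : Type*} {G : SimpleGraph V} {H W C : Set V}

theorem eq_or_adj_of_reachable_of_subsingleton_neighborSet {v x : V}
    (hv : ∀ h, G.Adj v h → (G.neighborSet h).Subsingleton) (hvx : G.Reachable v x) :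
    x = v ∨ G.Adj v x := by
  rw [SimpleGraph.reachable_iff_reflTransGen] at hvx
  induction hvx with
  | refl => exact Or.inl rfl
  | @tail y z _ hyz ih =>
    rcases ih with rfl | hvy
    · exact Or.inr hyz
    · exact Or.inl (hv y hvy hyz hvy.symm)

theorem subsingleton_neighborSet_diff_of_isVertexCover_dualGraph
    (hG : G.IsBipartiteWith H W) (hC : (dualGraph G H W).IsVertexCover C) {h : V} (hh : h ∈ H) :
    (G.neighborSet h \ C).Subsingleton := by
  rintro x ⟨hhx, hxC⟩ y ⟨hhy, hyC⟩
  by_contra hxy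
  have hdual : (dualGraph G H W).Adj x y :=
    ⟨hxy, hG.mem_of_mem_adj hh hhx, hG.mem_of_mem_adj hh hhy, h, hh, hhx, hhy⟩
  exact (hC hdual).elim hxC hyC

theorem subsingleton_neighborSet_induce_of_isVertexCover_dualGraph
    (hG : G.IsBipartiteWith H W) (hC : (dualGraph G H W).IsVertexCover C)
    {h : ↥(H ∪ (W \ C))} (hh : (h : V) ∈ H) :
    ((G.induce (H ∪ (W \ C))).neighborSet h).Subsingleton := by
  have notMem_cover : ∀ x : ↥(H ∪ (W \ C)), G.Adj h x → (x : V) ∉ C := fun x hhx =>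
    (x.2.resolve_left (hG.disjoint.notMem_of_mem_right (hG.mem_of_mem_adj hh hhx))).2
  exact fun x hhx y hhy => Subtype.ext <|
    subsingleton_neighborSet_diff_of_isVertexCover_dualGraph hG hC hh
      ⟨hhx, notMem_cover x hhx⟩ ⟨hhy, notMem_cover y hhy⟩

theorem vertexCover_dual_disconnects_general
    (hG : G.IsBipartiteWith H W) (hC : (dualGraph G H W).IsVertexCover C) :
    ∀ v v' : ↥(H ∪ (W \ C)), (v : V) ∈ W \ C → (v' : V) ∈ W \ C →
      v ≠ v' → ¬ (G.induce (H ∪ (W \ C))).Reachable v v' := by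
  intro v v' hv hv' hne hreach
  have mem_host : ∀ x : ↥(H ∪ (W \ C)), G.Adj v x → (x : V) ∈ H := fun _ hvx =>
    hG.symm.mem_of_mem_adj hv.1 hvx
  rcases eq_or_adj_of_reachable_of_subsingleton_neighborSet
    (fun h hvh => subsingleton_neighborSet_induce_of_isVertexCover_dualGraph hG hC
      (mem_host h hvh)) hreach with heq | hadj
  · exact hne heq.symm
  · exact hG.disjoint.notMem_of_mem_left (mem_host v' hadj) hv'.1

end

/-- Let `G` be a vulnerability graph with host part `H` and
vulnerability part `W`, let `D` be its dual graph, and let `C` be a vertex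
cover of `D`.  Then in the induced subgraph of `G` on `H ∪ (W \ C)`, any two
distinct vulnerability vertices of `W \ C` lie in different connected
components: there is no path (no reachability) in that induced subgraph
joining two distinct vertices of `W \ C`. -/
theorem vertexCover_dual_disconnects
    {V : Type*} [Fintype V] (G : SimpleGraph V) (H W : Set V)
    (hdisj : Disjoint H W) (hunion : H ∪ W = Set.univ)
    (hbip : ∀ u v, G.Adj u v → (u ∈ H ∧ v ∈ W) ∨ (u ∈ W ∧ v ∈ H))
    (D : SimpleGraph V)
    (hD : ∀ v v', D.Adj v v' ↔
      v ≠ v' ∧ v ∈ W ∧ v' ∈ W ∧ ∃ h ∈ H, G.Adj h v ∧ G.Adj h v')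
    (C : Set V) (hC : ∀ u v, D.Adj u v → u ∈ C ∨ v ∈ C) :
    ∀ v v' : ↥(H ∪ (W \ C)), (v : V) ∈ W \ C → (v' : V) ∈ W \ C →
      v ≠ v' → ¬ (G.induce (H ∪ (W \ C))).Reachable v v' := by
  obtain rfl : D = dualGraph G H W := SimpleGraph.ext (funext₂ fun v v' => propext (hD v v'))
  exact vertexCover_dual_disconnects_general ⟨hdisj, hbip⟩ hC
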